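/- arXiv:1207.1293 — 3 statements merged into one kernel-verified Lean document; each statement's English description precedes it below -/
import Mathlib

section
/- Let I be a nonempty index set and let {μ_s : s ∈ I} be a tight family of Borel probability measures on ℝ^d satisfying the logarithmic Sobolev inequality with a constant C > 0, i.e. ∫ f² log(|f|/‖f‖_{2,μ_s}) dμ_s ≤ C ∫ |∇f|² dμ_s for every s ∈ I and every f ∈ C¹_b(ℝ^d). Then for every λ with 0 < λ < 1/(2C) one has sup_{s∈I} ∫_{ℝ^d} e^{λ|x|²} dμ_s(x) < +∞. -/
open MeasureTheory

/-- `f : ℝ^d → ℝ` is of class `C¹_b`: continuously differentiable, bounded, with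
bounded gradient. -/
def C1b {d : ℕ} (f : EuclideanSpace ℝ (Fin d) → ℝ) : Prop :=
  ContDiff ℝ 1 f ∧ (∃ M, ∀ x, |f x| ≤ M) ∧ (∃ M, ∀ x, ‖gradient f x‖ ≤ M)

/-- The `L²(μ)` norm of a real-valued function. -/
noncomputable def L2Norm {d : ℕ} (μ : Measure (EuclideanSpace ℝ (Fin d)))
    (f : EuclideanSpace ℝ (Fin d) → ℝ) : ℝ :=
  (∫ x, |f x| ^ (2 : ℝ) ∂μ) ^ ((1 : ℝ) / 2)

/-!
Since `a log a - a log b + b - a ≥ (√a - √b)²`, the entropy `Ent(F²)` dominates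
`∫ (|F| - ‖F‖₂)² dμ`. If `F` is `1`-Lipschitz, the logarithmic Sobolev inequality bounds this by
`2C`; and if moreover `|F| ≤ K` on a set of mass at least `δ`, the integrand is at least
`(‖F‖₂ - K)₊²` on that set, so `‖F‖₂ ≤ K + √(2C/δ)`, however large `F` may be elsewhere.

Exponential moments follow by Herbst's argument: applied to `exp (u F² / 2)`, the inequality reads
`u H' - H ≤ 2C u² H'` for `H u = log ∫ exp (u F²) dμ`, i.e. `H u / u - 2C H u` is nonincreasing.
Comparison with its limit `∫ F² dμ` at `u = 0` gives `(1 - 2C t) H t ≤ t ∫ F² dμ`.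

The unbounded function `√(1 + ‖x‖²)`, a smooth `1`-Lipschitz majorant of `‖x‖`, is reached by
Fatou's lemma through its bounded `1`-Lipschitz truncations `n sin (√(1 + ‖x‖²) / n)`. Tightness
supplies a ball of mass at least `1/2` for all measures of the family at once.
-/

section Entropy

open Real Set

variable {Ω : Type*} [MeasurableSpace Ω] {μ : Measure Ω}

/-- The entropy `Ent_μ(g) = ∫ g log g dμ - (∫ g dμ) log (∫ g dμ)` of a nonnegative function `g`. -/
noncomputable def entropy (μ : Measure Ω) (g : Ω → ℝ) : ℝ :=
  ∫ x, g x * log (g x) ∂μ - (∫ x, g x ∂μ) * log (∫ x, g x ∂μ)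

lemma sq_sqrt_sub_sqrt_le {a b : ℝ} (ha : 0 ≤ a) (hb : 0 < b) :
    (√a - √b) ^ 2 ≤ a * log a - a * log b + (b - a) := by
  rcases ha.eq_or_lt with rfl | ha
  · simp [hb.le]
  have hlog : 1 - √b / √a ≤ (log a - log b) / 2 := by
    have h := one_sub_inv_le_log_of_pos (div_pos (sqrt_pos.2 ha) (sqrt_pos.2 hb))
    rwa [inv_div, log_div (sqrt_pos.2 ha).ne' (sqrt_pos.2 hb).ne', log_sqrt ha.le,
      log_sqrt hb.le, ← sub_div] at h
  have hsplit : a * (√b / √a) = √a * √b := by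
    rw [mul_div_assoc', div_eq_iff (sqrt_pos.2 ha).ne', mul_right_comm, mul_self_sqrt ha.le]
  nlinarith [mul_le_mul_of_nonneg_left hlog ha.le, sq_sqrt ha.le, sq_sqrt hb.le]

lemma integral_sq_sqrt_sub_sqrt_integral_le_entropy [IsProbabilityMeasure μ] {g : Ω → ℝ}
    (hg0 : 0 ≤ g) (hg : Integrable g μ) (hlog : Integrable (fun x ↦ g x * log (g x)) μ) :
    ∫ x, (√(g x) - √(∫ y, g y ∂μ)) ^ 2 ∂μ ≤ entropy μ g := by
  set m := ∫ x, g x ∂μ with hm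
  have hm_nonneg : 0 ≤ m := integral_nonneg hg0
  rcases hm_nonneg.eq_or_lt with hm0 | hm0
  · have hg_zero : g =ᵐ[μ] 0 := (integral_eq_zero_iff_of_nonneg hg0 hg).1 hm0.symm
    have hent : ∫ x, g x * log (g x) ∂μ = 0 :=
      integral_eq_zero_of_ae (hg_zero.mono fun x hx ↦ by simp [hx])
    have hsqrt : ∫ x, (√(g x) - √m) ^ 2 ∂μ = 0 :=
      integral_eq_zero_of_ae (hg_zero.mono fun x hx ↦ by simp [hx, ← hm0])
    rw [hsqrt, entropy, hent, ← hm, ← hm0, zero_mul, sub_zero]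
  · have hent : Integrable (fun x ↦ g x * log (g x) - g x * log m) μ :=
      hlog.sub (hg.mul_const _)
    have hdefect : Integrable (fun x ↦ m - g x) μ := (integrable_const m).sub hg
    calc ∫ x, (√(g x) - √m) ^ 2 ∂μ
        ≤ ∫ x, (g x * log (g x) - g x * log m + (m - g x)) ∂μ :=
          integral_mono_of_nonneg (.of_forall fun x ↦ sq_nonneg _) (hent.add hdefect)
            (.of_forall fun x ↦ sq_sqrt_sub_sqrt_le (hg0 x) hm0)
      _ = entropy μ g := by
          rw [integral_add hent hdefect, integral_sub hlog (hg.mul_const _), integral_mul_const,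
            integral_sub (integrable_const m) hg]
          simp [entropy, ← hm]

lemma entropy_sq_eq_two_mul_integral {f : Ω → ℝ} (hf : Integrable (fun x ↦ f x ^ 2) μ)
    (hlog : Integrable (fun x ↦ f x ^ 2 * log (f x ^ 2)) μ) :
    entropy μ (fun x ↦ f x ^ 2) =
      2 * ∫ x, f x ^ 2 * log (|f x| / √(∫ y, f y ^ 2 ∂μ)) ∂μ := by
  set m := ∫ x, f x ^ 2 ∂μ with hm
  have hf0 : 0 ≤ fun x ↦ f x ^ 2 := fun x ↦ sq_nonneg (f x)
  rw [← integral_const_mul, entropy, ← hm, hm, ← integral_mul_const, ← hm,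
    ← integral_sub hlog (hf.mul_const _)]
  refine integral_congr_ae ?_
  have hm_nonneg : 0 ≤ m := integral_nonneg hf0
  rcases hm_nonneg.eq_or_lt with hm0 | hm0
  · filter_upwards [(integral_eq_zero_iff_of_nonneg hf0 hf).1 hm0.symm] with x hx
    have hfx : f x = 0 := pow_eq_zero_iff two_ne_zero |>.1 hx
    simp [hfx]
  · refine .of_forall fun x ↦ ?_
    rcases eq_or_ne (f x) 0 with hx | hx
    · simp [hx]
    · beta_reduce
      rw [log_div (abs_ne_zero.2 hx) (sqrt_pos.2 hm0).ne', log_abs, log_sqrt hm0.le, log_pow]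
      push_cast
      ring

end Entropy

section Herbst

open ProbabilityTheory Real Set

lemma one_sub_mul_le_mul_deriv_zero {H : ℝ → ℝ} {c t : ℝ} (ht : 0 < t) (hH0 : H 0 = 0)
    (hH : ∀ u ∈ Icc 0 t, DifferentiableAt ℝ H u)
    (hle : ∀ u ∈ Ioo 0 t, u * deriv H u - H u ≤ c * u ^ 2 * deriv H u) :
    (1 - c * t) * H t ≤ t * deriv H 0 := by
  set G : ℝ → ℝ := fun u ↦ dslope H 0 u - c * H u with hG
  have hG_cont : ContinuousOn G (Icc 0 t) := fun u hu ↦ by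
    have hslope : ContinuousAt (dslope H 0) u := by
      rcases eq_or_ne u 0 with rfl | hu0
      · exact continuousAt_dslope_same.2 (hH 0 hu)
      · exact (continuousAt_dslope_of_ne hu0).2 (hH u hu).continuousAt
    exact (hslope.sub ((hH u hu).continuousAt.const_mul c)).continuousWithinAt
  have hG_deriv : ∀ u ∈ Ioo 0 t,
      HasDerivAt G ((deriv H u * u - H u) / u ^ 2 - c * deriv H u) u := fun u hu ↦ by
    have hH_deriv := (hH u (Ioo_subset_Icc_self hu)).hasDerivAt
    have hdiv : HasDerivAt (fun v ↦ H v / v) ((deriv H u * u - H u) / u ^ 2) u := by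
      simpa only [mul_one] using hH_deriv.fun_div (hasDerivAt_id' u) hu.1.ne'
    refine (hdiv.congr_of_eventuallyEq ?_).sub (hH_deriv.const_mul c)
    filter_upwards [dslope_eventuallyEq_slope_of_ne H hu.1.ne'] with v hv
    rw [hv, slope_def_field, hH0, sub_zero, sub_zero]
  have hG_anti : AntitoneOn G (Icc 0 t) := by
    refine antitoneOn_of_hasDerivWithinAt_nonpos (convex_Icc 0 t) hG_cont
      (f' := fun u ↦ (deriv H u * u - H u) / u ^ 2 - c * deriv H u) ?_ ?_ <;>
      rw [interior_Icc]
    · exact fun u hu ↦ (hG_deriv u hu).hasDerivWithinAt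
    · intro u hu
      rw [sub_nonpos, div_le_iff₀ (pow_pos hu.1 2)]
      linarith [hle u hu]
  have hGt := hG_anti (left_mem_Icc.2 ht.le) (right_mem_Icc.2 ht.le) ht.le
  simp only [hG, dslope_same, dslope_of_ne H ht.ne', slope_def_field, hH0, sub_zero, mul_zero]
    at hGt
  calc (1 - c * t) * H t = t * (H t / t - c * H t) := by field_simp
    _ ≤ t * deriv H 0 := by gcongr

variable {Ω : Type*} [MeasurableSpace Ω] {μ : Measure Ω} [IsProbabilityMeasure μ] {X : Ω → ℝ}

lemma entropy_exp_mul_eq {u : ℝ} (hu : u ∈ interior (integrableExpSet X μ)) :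
    entropy μ (fun ω ↦ exp (u * X ω)) = mgf X μ u * (u * deriv (cgf X μ) u - cgf X μ u) := by
  have hmgf : mgf X μ u ≠ 0 := (mgf_pos (interior_subset (s := integrableExpSet X μ) hu)).ne'
  have hint : ∫ ω, exp (u * X ω) * log (exp (u * X ω)) ∂μ =
      u * ∫ ω, X ω * exp (u * X ω) ∂μ := by
    rw [← integral_const_mul]
    exact integral_congr_ae (.of_forall fun ω ↦ by simp only [log_exp]; ring)
  rw [entropy, hint, deriv_cgf hu]
  change _ - mgf X μ u * cgf X μ u = _
  field_simp

lemma cgf_le_of_entropy_exp_mul_le {c t : ℝ} (ht : 0 < t) (hct : c * t < 1)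
    (hX : Icc 0 t ⊆ interior (integrableExpSet X μ))
    (hent : ∀ u ∈ Ioo 0 t, entropy μ (fun ω ↦ exp (u * X ω)) ≤
      c * u ^ 2 * ∫ ω, X ω * exp (u * X ω) ∂μ) :
    cgf X μ t ≤ t * μ[X] / (1 - c * t) := by
  rw [le_div_iff₀' (sub_pos.2 hct)]
  have hderiv_zero : deriv (cgf X μ) 0 = μ[X] := by
    simpa using deriv_cgf_zero (hX (left_mem_Icc.2 ht.le))
  rw [← hderiv_zero]
  refine one_sub_mul_le_mul_deriv_zero ht cgf_zero
    (fun u hu ↦ (analyticAt_cgf (hX hu)).differentiableAt) fun u hu ↦ ?_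
  have hu' := hX (Ioo_subset_Icc_self hu)
  have hmgf : 0 < mgf X μ u := mgf_pos (interior_subset (s := integrableExpSet X μ) hu')
  have hint : ∫ ω, X ω * exp (u * X ω) ∂μ = mgf X μ u * deriv (cgf X μ) u := by
    rw [deriv_cgf hu', mul_div_cancel₀ _ hmgf.ne']
  refine le_of_mul_le_mul_left ?_ hmgf
  calc mgf X μ u * (u * deriv (cgf X μ) u - cgf X μ u)
      ≤ c * u ^ 2 * (mgf X μ u * deriv (cgf X μ) u) := by
        rw [← entropy_exp_mul_eq hu', ← hint]; exact hent u hu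
    _ = mgf X μ u * (c * u ^ 2 * deriv (cgf X μ) u) := by ring

end Herbst

section LogSobolev

open ProbabilityTheory Real Set Filter Topology

section BoundedC1

variable {E : Type*} [NormedAddCommGroup E] [NormedSpace ℝ E] {f : E → ℝ} {φ : ℝ → ℝ}

/-- The class `C¹_b(E)` over a normed space `E`, with the Fréchet derivative in place of the
gradient so that `E` need not be a Hilbert space. -/
structure IsBoundedC1 (f : E → ℝ) : Prop where
  contDiff : ContDiff ℝ 1 f
  bounded : ∃ M, ∀ x, |f x| ≤ M
  fderiv_bounded : ∃ M, ∀ x, ‖fderiv ℝ f x‖ ≤ M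

lemma exists_abs_comp_le {α : Type*} {f : α → ℝ} (hf : ∃ M, ∀ x, |f x| ≤ M)
    (hφ : Continuous φ) : ∃ M, ∀ x, |φ (f x)| ≤ M := by
  obtain ⟨M, hM⟩ := hf
  obtain ⟨B, hB⟩ := (isCompact_Icc (a := -M) (b := M)).exists_bound_of_continuousOn
    hφ.continuousOn
  exact ⟨B, fun x ↦ hB _ (abs_le.1 (hM x))⟩

lemma fderiv_comp_eq_deriv_smul {x : E} (hφ : DifferentiableAt ℝ φ (f x))
    (hf : DifferentiableAt ℝ f x) :
    fderiv ℝ (fun y ↦ φ (f y)) x = deriv φ (f x) • fderiv ℝ f x :=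
  (hφ.hasDerivAt.comp_hasFDerivAt x hf.hasFDerivAt).fderiv

namespace IsBoundedC1

lemma comp (hφ : ContDiff ℝ 1 φ) (hf : IsBoundedC1 f) : IsBoundedC1 (fun x ↦ φ (f x)) where
  contDiff := hφ.comp hf.contDiff
  bounded := exists_abs_comp_le hf.bounded hφ.continuous
  fderiv_bounded := by
    obtain ⟨A, hA⟩ := exists_abs_comp_le hf.bounded (hφ.continuous_deriv le_rfl)
    obtain ⟨B, hB⟩ := hf.fderiv_bounded
    refine ⟨A * B, fun x ↦ ?_⟩
    rw [fderiv_comp_eq_deriv_smul (hφ.differentiable one_ne_zero _)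
      (hf.contDiff.differentiable one_ne_zero x), norm_smul]
    exact mul_le_mul (hA x) (hB x) (norm_nonneg _) ((abs_nonneg _).trans (hA x))

lemma integrable_comp [MeasurableSpace E] [OpensMeasurableSpace E] {μ : Measure E}
    [IsFiniteMeasure μ] (hf : IsBoundedC1 f) (hφ : Continuous φ) :
    Integrable (fun x ↦ φ (f x)) μ := by
  obtain ⟨M, hM⟩ := exists_abs_comp_le hf.bounded hφ
  exact .of_bound (hφ.comp hf.contDiff.continuous).aestronglyMeasurable M (.of_forall hM)

end IsBoundedC1

end BoundedC1

section SineTruncation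

variable {E : Type*} [NormedAddCommGroup E] [NormedSpace ℝ E] {P : E → ℝ}

lemma abs_mul_sin_div_le_abs (r p : ℝ) : |r * sin (p / r)| ≤ |p| := by
  rcases eq_or_ne r 0 with rfl | hr
  · simp
  calc |r * sin (p / r)| = |r| * |sin (p / r)| := abs_mul _ _
    _ ≤ |r| * |p / r| := mul_le_mul_of_nonneg_left abs_sin_le_abs (abs_nonneg r)
    _ = |p| := by rw [← abs_mul, mul_div_cancel₀ _ hr]

lemma tendsto_mul_sin_div_atTop (p : ℝ) :
    Tendsto (fun r ↦ r * sin (p / r)) atTop (𝓝 p) := by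
  have hlim : Tendsto (fun r ↦ p * sinc (p / r)) atTop (𝓝 p) := by
    simpa using ((continuous_sinc.tendsto 0).comp
      (tendsto_const_nhds.div_atTop tendsto_id)).const_mul p
  refine hlim.congr' ?_
  filter_upwards [eventually_ne_atTop 0] with r hr
  rcases eq_or_ne p 0 with rfl | hp
  · simp
  · rw [sinc_of_ne_zero (div_ne_zero hp hr)]
    field_simp

lemma norm_fderiv_mul_sin_div_le {x : E} (hP : DifferentiableAt ℝ P x) (r : ℝ) :
    ‖fderiv ℝ (fun y ↦ r * sin (P y / r)) x‖ ≤ ‖fderiv ℝ P x‖ := by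
  rcases eq_or_ne r 0 with rfl | hr
  · simp
  have hderiv : HasDerivAt (fun s ↦ r * sin (s / r)) (cos (P x / r)) (P x) := by
    convert! ((hasDerivAt_id (P x)).div_const r).sin.const_mul r using 1
    simp only [id]; field_simp
  rw [fderiv_comp_eq_deriv_smul hderiv.differentiableAt hP, hderiv.deriv, norm_smul]
  exact mul_le_of_le_one_left (norm_nonneg _) (abs_cos_le_one _)

lemma isBoundedC1_mul_sin_div (hP : ContDiff ℝ 1 P)
    (hP' : ∃ M, ∀ x, ‖fderiv ℝ P x‖ ≤ M) (r : ℝ) :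
    IsBoundedC1 (fun x ↦ r * sin (P x / r)) where
  contDiff := by fun_prop
  bounded := ⟨|r|, fun x ↦ by
    rw [abs_mul]; exact mul_le_of_le_one_right (abs_nonneg r) (abs_sin_le_one _)⟩
  fderiv_bounded := hP'.imp fun _ hM x ↦
    (norm_fderiv_mul_sin_div_le (hP.differentiable one_ne_zero x) r).trans (hM x)

end SineTruncation

variable {E : Type*} [NormedAddCommGroup E] [NormedSpace ℝ E] [MeasurableSpace E]
  {μ : Measure E} {C : ℝ}

/-- The logarithmic Sobolev inequality `Ent_μ(f²) ≤ 2C ∫ ‖f'‖² dμ` on `C¹_b`. For a probability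
measure the left side is `2 ∫ f² log (|f| / ‖f‖_{2,μ}) dμ`, which accounts for the factor `2`. -/
def LogSobolevInequality (μ : Measure E) (C : ℝ) : Prop :=
  ∀ f : E → ℝ, IsBoundedC1 f →
    entropy μ (fun x ↦ f x ^ 2) ≤ 2 * C * ∫ x, ‖fderiv ℝ f x‖ ^ 2 ∂μ

namespace LogSobolevInequality

lemma entropy_exp_le (hμ : LogSobolevInequality μ C) {X : E → ℝ} (hX : IsBoundedC1 X) :
    entropy μ (fun x ↦ exp (X x)) ≤ C / 2 * ∫ x, ‖fderiv ℝ X x‖ ^ 2 * exp (X x) ∂μ := by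
  have hsq (x : E) : exp (X x / 2) ^ 2 = exp (X x) := by
    rw [← exp_nat_mul]; push_cast; ring_nf
  have hfderiv (x : E) : ‖fderiv ℝ (fun y ↦ exp (X y / 2)) x‖ ^ 2 =
      1 / 4 * (‖fderiv ℝ X x‖ ^ 2 * exp (X x)) := by
    have hderiv : HasDerivAt (fun s ↦ exp (s / 2)) (exp (X x / 2) * (1 / 2)) (X x) :=
      ((hasDerivAt_id (X x)).div_const 2).exp
    rw [fderiv_comp_eq_deriv_smul hderiv.differentiableAt
      (hX.contDiff.differentiable one_ne_zero x), hderiv.deriv, norm_smul, mul_pow,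
      norm_eq_abs, sq_abs, mul_pow, hsq]
    ring
  have hLSI := hμ _ (hX.comp (φ := fun s ↦ exp (s / 2)) (by fun_prop))
  simp only [hsq, hfderiv, integral_const_mul] at hLSI
  linarith

variable [OpensMeasurableSpace E] [IsProbabilityMeasure μ] {F : E → ℝ}

lemma entropy_exp_mul_sq_le (hC : 0 ≤ C) (hμ : LogSobolevInequality μ C) (hF : IsBoundedC1 F)
    (hF' : ∀ x, ‖fderiv ℝ F x‖ ≤ 1) (u : ℝ) :
    entropy μ (fun x ↦ exp (u * F x ^ 2)) ≤
      2 * C * u ^ 2 * ∫ x, F x ^ 2 * exp (u * F x ^ 2) ∂μ := by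
  have hfderiv (x : E) : ‖fderiv ℝ (fun y ↦ u * F y ^ 2) x‖ ^ 2 ≤ 4 * u ^ 2 * F x ^ 2 := by
    have hderiv : HasDerivAt (fun s ↦ u * s ^ 2) (2 * u * F x) (F x) := by
      convert! (hasDerivAt_pow 2 (F x)).const_mul u using 1
      push_cast; ring
    rw [fderiv_comp_eq_deriv_smul hderiv.differentiableAt
      (hF.contDiff.differentiable one_ne_zero x), hderiv.deriv, norm_smul, mul_pow, norm_eq_abs,
      sq_abs]
    calc (2 * u * F x) ^ 2 * ‖fderiv ℝ F x‖ ^ 2 ≤ (2 * u * F x) ^ 2 * 1 := by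
          gcongr; exact pow_le_one₀ (norm_nonneg _) (hF' x)
      _ = 4 * u ^ 2 * F x ^ 2 := by ring
  have hint : ∫ x, ‖fderiv ℝ (fun y ↦ u * F y ^ 2) x‖ ^ 2 * exp (u * F x ^ 2) ∂μ ≤
      4 * u ^ 2 * ∫ x, F x ^ 2 * exp (u * F x ^ 2) ∂μ := by
    rw [← integral_const_mul]
    refine integral_mono_of_nonneg (.of_forall fun x ↦ by positivity)
      (hF.integrable_comp (φ := fun s ↦ 4 * u ^ 2 * (s ^ 2 * exp (u * s ^ 2))) (by fun_prop))
      (.of_forall fun x ↦ ?_)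
    simp only [← mul_assoc]
    exact mul_le_mul_of_nonneg_right (hfderiv x) (exp_pos _).le
  calc entropy μ (fun x ↦ exp (u * F x ^ 2))
      ≤ C / 2 * ∫ x, ‖fderiv ℝ (fun y ↦ u * F y ^ 2) x‖ ^ 2 * exp (u * F x ^ 2) ∂μ :=
        hμ.entropy_exp_le (hF.comp (φ := fun s ↦ u * s ^ 2) (by fun_prop))
    _ ≤ C / 2 * (4 * u ^ 2 * ∫ x, F x ^ 2 * exp (u * F x ^ 2) ∂μ) := by gcongr
    _ = 2 * C * u ^ 2 * ∫ x, F x ^ 2 * exp (u * F x ^ 2) ∂μ := by ring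

lemma integral_exp_mul_sq_le (hC : 0 ≤ C) (hμ : LogSobolevInequality μ C)
    (hF : IsBoundedC1 F) (hF' : ∀ x, ‖fderiv ℝ F x‖ ≤ 1) {t : ℝ} (ht : 0 < t)
    (hCt : 2 * C * t < 1) :
    ∫ x, exp (t * F x ^ 2) ∂μ ≤ exp (t * (∫ x, F x ^ 2 ∂μ) / (1 - 2 * C * t)) := by
  have hexp (u : ℝ) : Integrable (fun x ↦ exp (u * F x ^ 2)) μ :=
    hF.integrable_comp (φ := fun s ↦ exp (u * s ^ 2)) (by fun_prop)
  have hset : integrableExpSet (fun x ↦ F x ^ 2) μ = univ := eq_univ_of_forall hexp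
  change mgf (fun x ↦ F x ^ 2) μ t ≤ _
  rw [← exp_cgf (hexp t)]
  exact exp_le_exp.2 <| cgf_le_of_entropy_exp_mul_le ht hCt (by simp [hset])
    fun u _ ↦ hμ.entropy_exp_mul_sq_le hC hF hF' u

lemma sqrt_integral_sq_le (hC : 0 ≤ C) (hμ : LogSobolevInequality μ C) (hF : IsBoundedC1 F)
    (hF' : ∀ x, ‖fderiv ℝ F x‖ ≤ 1) {A : Set E} {K δ : ℝ} (hFA : ∀ x ∈ A, |F x| ≤ K)
    (hδ : 0 < δ) (hA : δ ≤ μ.real A) :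
    √(∫ x, F x ^ 2 ∂μ) ≤ K + √(2 * C / δ) := by
  set r := √(∫ x, F x ^ 2 ∂μ)
  rcases le_total r K with hrK | hKr
  · exact hrK.trans (le_add_of_nonneg_right (sqrt_nonneg _))
  have hgrad : ∫ x, ‖fderiv ℝ F x‖ ^ 2 ∂μ ≤ 1 := by
    simpa using integral_mono_of_nonneg (μ := μ) (.of_forall fun x ↦ by positivity)
      (integrable_const 1) (.of_forall fun x ↦ pow_le_one₀ (norm_nonneg _) (hF' x))
  have hvar : ∫ x, (|F x| - r) ^ 2 ∂μ ≤ 2 * C := by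
    have hent := integral_sq_sqrt_sub_sqrt_integral_le_entropy (fun x ↦ sq_nonneg (F x))
      (hF.integrable_comp (μ := μ) (continuous_pow 2))
      (hF.integrable_comp (continuous_mul_log.comp (continuous_pow 2)))
    simp only [sqrt_sq_eq_abs] at hent
    nlinarith [hμ F hF]
  have hmarkov : (r - K) ^ 2 * μ.real A ≤ ∫ x, (|F x| - r) ^ 2 ∂μ := by
    refine le_trans ?_ (mul_meas_ge_le_integral_of_nonneg (.of_forall fun x ↦ sq_nonneg _)
      (hF.integrable_comp (φ := fun s ↦ (|s| - r) ^ 2) (by fun_prop)) ((r - K) ^ 2))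
    refine mul_le_mul_of_nonneg_left (measureReal_mono fun x hx ↦ ?_) (sq_nonneg _)
    calc (r - K) ^ 2 ≤ (r - |F x|) ^ 2 :=
          pow_le_pow_left₀ (sub_nonneg.2 hKr) (sub_le_sub_left (hFA x hx) r) 2
      _ = (|F x| - r) ^ 2 := sub_sq_comm _ _
  have hsq : (r - K) ^ 2 ≤ 2 * C / δ := by
    rw [le_div_iff₀ hδ]
    exact (mul_le_mul_of_nonneg_left hA (sq_nonneg _)).trans (hmarkov.trans hvar)
  linarith [le_sqrt_of_sq_le hsq]

end LogSobolevInequality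

lemma LogSobolevInequality.lintegral_exp_mul_sq_le [OpensMeasurableSpace E]
    [IsProbabilityMeasure μ] (hC : 0 ≤ C) (hμ : LogSobolevInequality μ C) {P : E → ℝ}
    (hP : ContDiff ℝ 1 P) (hP' : ∀ x, ‖fderiv ℝ P x‖ ≤ 1) {A : Set E} {K δ : ℝ}
    (hPA : ∀ x ∈ A, |P x| ≤ K) (hδ : 0 < δ) (hA : δ ≤ μ.real A) {t : ℝ} (ht : 0 < t)
    (hCt : 2 * C * t < 1) :
    ∫⁻ x, ENNReal.ofReal (exp (t * P x ^ 2)) ∂μ ≤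
      ENNReal.ofReal (exp (t * (K + √(2 * C / δ)) ^ 2 / (1 - 2 * C * t))) := by
  set F : ℕ → E → ℝ := fun n x ↦ n * sin (P x / n)
  have hF (n : ℕ) : IsBoundedC1 (F n) := isBoundedC1_mul_sin_div hP ⟨1, hP'⟩ n
  have hF' (n : ℕ) (x : E) : ‖fderiv ℝ (F n) x‖ ≤ 1 :=
    (norm_fderiv_mul_sin_div_le (hP.differentiable one_ne_zero x) n).trans (hP' x)
  have hFt (n : ℕ) : Continuous fun x ↦ exp (t * F n x ^ 2) := by
    have := (hF n).contDiff.continuous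
    fun_prop
  have hbound (n : ℕ) : ∫⁻ x, ENNReal.ofReal (exp (t * F n x ^ 2)) ∂μ ≤
      ENNReal.ofReal (exp (t * (K + √(2 * C / δ)) ^ 2 / (1 - 2 * C * t))) := by
    have hnorm : √(∫ x, F n x ^ 2 ∂μ) ≤ K + √(2 * C / δ) :=
      hμ.sqrt_integral_sq_le hC (hF n) (hF' n)
        (fun x hx ↦ (abs_mul_sin_div_le_abs _ _).trans (hPA x hx)) hδ hA
    have hmoment : ∫ x, F n x ^ 2 ∂μ ≤ (K + √(2 * C / δ)) ^ 2 :=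
      (sqrt_le_left ((sqrt_nonneg _).trans hnorm)).1 hnorm
    rw [← ofReal_integral_eq_lintegral_ofReal
      ((hF n).integrable_comp (φ := fun s ↦ exp (t * s ^ 2)) (by fun_prop))
      (.of_forall fun x ↦ (exp_pos _).le)]
    refine ENNReal.ofReal_le_ofReal ((hμ.integral_exp_mul_sq_le hC (hF n) (hF' n) ht hCt).trans ?_)
    gcongr
  have hlim (x : E) : Tendsto (fun n ↦ ENNReal.ofReal (exp (t * F n x ^ 2))) atTop
      (𝓝 (ENNReal.ofReal (exp (t * P x ^ 2)))) := by
    have hFx := (tendsto_mul_sin_div_atTop (P x)).comp tendsto_natCast_atTop_atTop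
    exact ENNReal.tendsto_ofReal ((continuous_exp.tendsto _).comp ((hFx.pow 2).const_mul t))
  calc ∫⁻ x, ENNReal.ofReal (exp (t * P x ^ 2)) ∂μ
      = ∫⁻ x, liminf (fun n ↦ ENNReal.ofReal (exp (t * F n x ^ 2))) atTop ∂μ :=
        lintegral_congr fun x ↦ (hlim x).liminf_eq.symm
    _ ≤ liminf (fun n ↦ ∫⁻ x, ENNReal.ofReal (exp (t * F n x ^ 2)) ∂μ) atTop :=
        lintegral_liminf_le fun n ↦ (hFt n).measurable.ennreal_ofReal
    _ ≤ _ := liminf_le_of_frequently_le' (.of_forall hbound)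

end LogSobolev

lemma contDiff_sqrt_one_add_norm_sq {E : Type*} [NormedAddCommGroup E] [InnerProductSpace ℝ E]
    {n : WithTop ℕ∞} :
    ContDiff ℝ n fun x : E ↦ √(1 + ‖x‖ ^ 2) :=
  (contDiff_const.add (contDiff_norm_sq ℝ)).sqrt fun x ↦ by positivity

lemma norm_fderiv_sqrt_one_add_norm_sq_le_one {E : Type*} [NormedAddCommGroup E]
    [InnerProductSpace ℝ E] (x : E) :
    ‖fderiv ℝ (fun y : E ↦ √(1 + ‖y‖ ^ 2)) x‖ ≤ 1 := by
  have hpos : 0 < √(1 + ‖x‖ ^ 2) := by positivity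
  have hfderiv := (((hasStrictFDerivAt_norm_sq x).hasFDerivAt.const_add 1).sqrt
    (by positivity)).fderiv
  rw [hfderiv, smul_comm, ← Nat.cast_smul_eq_nsmul ℝ, smul_smul, norm_smul, innerSL_apply_norm,
    Real.norm_of_nonneg (by positivity)]
  have : ‖x‖ ≤ √(1 + ‖x‖ ^ 2) := Real.le_sqrt_of_sq_le (by linarith)
  field_simp
  simpa using this

theorem gaussian_moment_bounded_of_LSI_general {E : Type*} [NormedAddCommGroup E]
    [InnerProductSpace ℝ E] [MeasurableSpace E] [OpensMeasurableSpace E] {μ : Measure E}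
    [IsProbabilityMeasure μ] {C : ℝ} (hC : 0 ≤ C) (hμ : LogSobolevInequality μ C) {R δ : ℝ}
    (hδ : 0 < δ) (hball : δ ≤ μ.real (Metric.ball 0 R)) {lam : ℝ} (hlam : 0 < lam)
    (hClam : 2 * C * lam < 1) :
    ∫⁻ x, ENNReal.ofReal (Real.exp (lam * ‖x‖ ^ 2)) ∂μ ≤
      ENNReal.ofReal
        (Real.exp (lam * (√(1 + R ^ 2) + √(2 * C / δ)) ^ 2 / (1 - 2 * C * lam))) := by
  refine le_trans (lintegral_mono fun x ↦ ?_) (hμ.lintegral_exp_mul_sq_le hC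
    contDiff_sqrt_one_add_norm_sq norm_fderiv_sqrt_one_add_norm_sq_le_one (fun x hx ↦ ?_) hδ hball
    hlam hClam)
  · rw [Real.sq_sqrt (by positivity)]
    gcongr
    linarith
  · rw [abs_of_nonneg (Real.sqrt_nonneg _)]
    gcongr
    exact (mem_ball_zero_iff.1 hx).le

lemma L2Norm_eq_sqrt_integral_sq {d : ℕ} (μ : Measure (EuclideanSpace ℝ (Fin d)))
    (f : EuclideanSpace ℝ (Fin d) → ℝ) : L2Norm μ f = √(∫ x, f x ^ 2 ∂μ) := by
  simp only [L2Norm, Real.sqrt_eq_rpow, Real.rpow_two, sq_abs]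

lemma norm_gradient_eq_norm_fderiv {E : Type*} [NormedAddCommGroup E] [InnerProductSpace ℝ E]
    [CompleteSpace E] (f : E → ℝ) (x : E) : ‖gradient f x‖ = ‖fderiv ℝ f x‖ := by
  rw [← toDual_gradient, LinearIsometryEquiv.norm_map]

lemma logSobolevInequality_of_forall_C1b {d : ℕ} {μ : Measure (EuclideanSpace ℝ (Fin d))}
    [IsFiniteMeasure μ] {C : ℝ}
    (hLSI : ∀ f, C1b f →
      ∫ x, f x ^ 2 * Real.log (|f x| / L2Norm μ f) ∂μ ≤ C * ∫ x, ‖gradient f x‖ ^ 2 ∂μ) :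
    LogSobolevInequality μ C := fun f hf ↦ by
  have hle := hLSI f
    ⟨hf.contDiff, hf.bounded, by simpa only [norm_gradient_eq_norm_fderiv] using hf.fderiv_bounded⟩
  simp only [norm_gradient_eq_norm_fderiv, L2Norm_eq_sqrt_integral_sq] at hle
  rw [entropy_sq_eq_two_mul_integral (hf.integrable_comp (continuous_pow 2))
    (hf.integrable_comp (Real.continuous_mul_log.comp (continuous_pow 2)))]
  linarith

/-- a tight family of Borel probability measures on `ℝ^d` satisfying a
logarithmic Sobolev inequality with constant `C > 0` has uniformly bounded Gaussian
moments of order `λ` for every `0 < λ < 1/(2C)`. -/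
theorem gaussian_moment_bounded_of_LSI
    {d : ℕ} {ι : Type*} [Nonempty ι]
    (μ : ι → Measure (EuclideanSpace ℝ (Fin d)))
    [∀ s, IsProbabilityMeasure (μ s)]
    (htight : ∀ ε > (0 : ℝ), ∃ R > (0 : ℝ), ∀ s,
      1 - ε ≤ ((μ s) (Metric.ball 0 R)).toReal)
    (C : ℝ) (hC : 0 < C)
    (hLSI : ∀ s, ∀ f : EuclideanSpace ℝ (Fin d) → ℝ, C1b f →
      ∫ x, (f x) ^ 2 * Real.log (|f x| / L2Norm (μ s) f) ∂(μ s)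
        ≤ C * ∫ x, ‖gradient f x‖ ^ 2 ∂(μ s)) :
    ∀ lam : ℝ, 0 < lam → lam < 1 / (2 * C) → ∃ M : ℝ, ∀ s,
      ∫⁻ x, ENNReal.ofReal (Real.exp (lam * ‖x‖ ^ 2)) ∂(μ s) ≤ ENNReal.ofReal M := by
  intro lam hlam hlt
  obtain ⟨R, -, hR⟩ := htight (1 / 2) one_half_pos
  have hClam : 2 * C * lam < 1 := (lt_div_iff₀' (by positivity)).1 hlt
  exact ⟨_, fun s ↦ gaussian_moment_bounded_of_LSI_general hC.le
    (logSobolevInequality_of_forall_C1b (hLSI s)) (by norm_num) (hR s) hlam hClam⟩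
end

section
/- Let μ be a Borel probability measure on ℝ^d satisfying the family of logarithmic Sobolev inequalities LSI_ε: there exists a decreasing function β : (0,∞) → (0,∞) such that ∫ f² log(|f|/‖f‖_{2,μ}) dμ ≤ ε ∫ |∇f|² dμ + β(ε) ‖f‖²_{2,μ} for every ε > 0 and every f ∈ C¹_b(ℝ^d). Then for every f ∈ C¹_b(ℝ^d) with |∇f(x)| ≤ 1 for all x, every ε > 0 and all 0 < γ < σ, one has ∫_{ℝ^d} e^{σ f} dμ ≤ exp( (ε/2)σ² + σ( γ^{-1} log(∫_{ℝ^d} e^{γ f} dμ) − (ε/2)γ + 2β(ε)/γ ) − 2β(ε) ). -/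
open MeasureTheory

/-!
The Herbst argument. Applied to `exp (t f / 2)` with `|∇f| ≤ L`, the defective logarithmic Sobolev
inequality becomes the differential inequality `t ψ' - ψ ≤ (ε / 2) L² t² + 2 b` for the cumulant
generating function `ψ t = log ∫ exp (t f) dμ`. Divided by `t²`, it says that
`(ψ t + 2 b) / t - (ε / 2) L² t` is nonincreasing on `(0, ∞)`; comparing the values at `γ` and `σ`
and exponentiating gives the estimate.
-/

open ProbabilityTheory

section HerbstInequality

variable {ψ : ℝ → ℝ} {a c : ℝ}

theorem antitoneOn_add_div_sub_mul_of_mul_deriv_sub_le (hψ : DifferentiableOn ℝ ψ (Set.Ioi 0))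
    (h : ∀ t > 0, t * deriv ψ t - ψ t ≤ a * t ^ 2 + c) :
    AntitoneOn (fun t => (ψ t + c) / t - a * t) (Set.Ioi 0) := by
  have hderiv : ∀ t > 0, HasDerivAt (fun t => (ψ t + c) / t - a * t)
      ((t * deriv ψ t - ψ t - (a * t ^ 2 + c)) / t ^ 2) t := fun t ht => by
    have hψt : HasDerivAt ψ (deriv ψ t) t := (hψ.differentiableAt (Ioi_mem_nhds ht)).hasDerivAt
    refine (((hψt.add_const c).fun_div (hasDerivAt_id' t) ht.ne').fun_sub
      (hasDerivAt_const_mul a)).congr_deriv ?_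
    field_simp
    ring
  refine antitoneOn_of_deriv_nonpos (convex_Ioi 0)
    (fun t ht => (hderiv t ht).continuousAt.continuousWithinAt) ?_ ?_
  all_goals rw [interior_Ioi]
  · exact fun t ht => (hderiv t ht).differentiableAt.differentiableWithinAt
  · intro t ht
    rw [(hderiv t ht).deriv]
    exact div_nonpos_of_nonpos_of_nonneg (sub_nonpos.2 (h t ht)) (sq_nonneg t)

theorem le_of_mul_deriv_sub_le (hψ : DifferentiableOn ℝ ψ (Set.Ioi 0))
    (h : ∀ t > 0, t * deriv ψ t - ψ t ≤ a * t ^ 2 + c) {γ σ : ℝ} (hγ : 0 < γ) (hγσ : γ ≤ σ) :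
    ψ σ ≤ a * σ ^ 2 + σ * (γ⁻¹ * ψ γ - a * γ + c / γ) - c := by
  have hσ : 0 < σ := hγ.trans_le hγσ
  have hquot : (ψ σ + c) / σ - a * σ ≤ (ψ γ + c) / γ - a * γ :=
    antitoneOn_add_div_sub_mul_of_mul_deriv_sub_le hψ h hγ hσ hγσ
  calc
    ψ σ = a * σ ^ 2 + σ * ((ψ σ + c) / σ - a * σ) - c := by field_simp; ring
    _ ≤ a * σ ^ 2 + σ * ((ψ γ + c) / γ - a * γ) - c := by gcongr
    _ = a * σ ^ 2 + σ * (γ⁻¹ * ψ γ - a * γ + c / γ) - c := by ring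

end HerbstInequality

theorem exp_half_mul_sq (t x : ℝ) : Real.exp (t / 2 * x) ^ 2 = Real.exp (t * x) := by
  rw [← Real.exp_nat_mul]
  ring_nf

theorem integral_exp_half_sq_mul_log {Ω : Type*} [MeasurableSpace Ω] {μ : Measure Ω} [NeZero μ]
    {X : Ω → ℝ} {t : ℝ} (ht : t ∈ interior (integrableExpSet X μ)) :
    ∫ ω, Real.exp (t / 2 * X ω) ^ 2 * Real.log (|Real.exp (t / 2 * X ω)| / √(mgf X μ t)) ∂μ
      = mgf X μ t / 2 * (t * deriv (cgf X μ) t - cgf X μ t) := by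
  have hexp : Integrable (fun ω => Real.exp (t * X ω)) μ :=
    interior_subset (s := integrableExpSet X μ) ht
  have hmul : Integrable (fun ω => X ω * Real.exp (t * X ω)) μ := by
    simpa using integrable_pow_mul_exp_of_mem_interior_integrableExpSet ht 1
  have hpos : 0 < mgf X μ t := mgf_pos' (NeZero.ne μ) hexp
  have hlog : ∀ ω, Real.exp (t / 2 * X ω) ^ 2
        * Real.log (|Real.exp (t / 2 * X ω)| / √(mgf X μ t))
      = t / 2 * (X ω * Real.exp (t * X ω)) - cgf X μ t / 2 * Real.exp (t * X ω) := fun ω => by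
    rw [exp_half_mul_sq, Real.abs_exp, Real.log_div (Real.exp_ne_zero _) (Real.sqrt_pos.2 hpos).ne',
      Real.log_exp, Real.log_sqrt hpos.le, ← cgf]
    ring
  simp_rw [hlog]
  rw [integral_sub (hmul.const_mul _) (hexp.const_mul _), integral_const_mul, integral_const_mul,
    deriv_cgf ht, ← mgf]
  field_simp

theorem hasGradientAt_real_comp {F : Type*} [NormedAddCommGroup F] [InnerProductSpace ℝ F]
    [CompleteSpace F] {φ : ℝ → ℝ} {φ' : ℝ} {f : F → ℝ} {f' x : F} (hφ : HasDerivAt φ φ' (f x))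
    (hf : HasGradientAt f f' x) : HasGradientAt (fun y => φ (f y)) (φ' • f') x := by
  rw [hasGradientAt_iff_hasFDerivAt, map_smul]
  exact hφ.comp_hasFDerivAt x hf.hasFDerivAt

section LogSobolev

variable {d : ℕ} {μ : Measure (EuclideanSpace ℝ (Fin d))} {f : EuclideanSpace ℝ (Fin d) → ℝ}

theorem L2Norm_eq_sqrt : L2Norm μ f = √(∫ x, f x ^ 2 ∂μ) := by
  simp only [L2Norm, Real.rpow_two, sq_abs, Real.sqrt_eq_rpow]

theorem L2Norm_exp_half (t : ℝ) :
    L2Norm μ (fun x => Real.exp (t / 2 * f x)) = √(mgf f μ t) := by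
  simp only [L2Norm_eq_sqrt, exp_half_mul_sq, mgf]

namespace C1b

theorem hasGradientAt (hf : C1b f) (x : EuclideanSpace ℝ (Fin d)) :
    HasGradientAt f (gradient f x) x :=
  (hf.1.differentiable one_ne_zero x).hasGradientAt

theorem contDiff_comp (hf : C1b f) {φ : ℝ → ℝ} (hφ : ContDiff ℝ 1 φ) :
    C1b (fun x => φ (f x)) := by
  obtain ⟨M, hM⟩ := hf.2.1
  obtain ⟨K, hK⟩ := hf.2.2
  have hmem : ∀ x, f x ∈ Set.Icc (-M) M := fun x => abs_le.1 (hM x)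
  obtain ⟨A, hA⟩ := isCompact_Icc.exists_bound_of_continuousOn (s := Set.Icc (-M) M)
    hφ.continuous.continuousOn
  obtain ⟨B, hB⟩ := isCompact_Icc.exists_bound_of_continuousOn (s := Set.Icc (-M) M)
    (hφ.continuous_deriv le_rfl).continuousOn
  refine ⟨hφ.comp hf.1, ⟨A, fun x => hA _ (hmem x)⟩, ⟨B * K, fun x => ?_⟩⟩
  have hφx : HasDerivAt φ (deriv φ (f x)) (f x) :=
    (hφ.differentiable one_ne_zero _).hasDerivAt
  rw [(hasGradientAt_real_comp hφx (hf.hasGradientAt x)).gradient, norm_smul]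
  exact mul_le_mul (hB _ (hmem x)) (hK x) (norm_nonneg _) ((norm_nonneg _).trans (hB _ (hmem x)))

theorem exp_mul (hf : C1b f) (t : ℝ) : C1b (fun x => Real.exp (t * f x)) :=
  hf.contDiff_comp (φ := fun y => Real.exp (t * y)) (by fun_prop)

theorem integrable [IsFiniteMeasure μ] (hf : C1b f) : Integrable f μ :=
  let ⟨M, hM⟩ := hf.2.1
  Integrable.of_bound hf.1.continuous.aestronglyMeasurable M (.of_forall hM)

theorem integrableExpSet_eq_univ [IsFiniteMeasure μ] (hf : C1b f) :
    integrableExpSet f μ = Set.univ :=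
  Set.eq_univ_of_forall fun t => (hf.exp_mul t).integrable

theorem mem_interior_integrableExpSet [IsFiniteMeasure μ] (hf : C1b f) (t : ℝ) :
    t ∈ interior (integrableExpSet f μ) := by
  simp [hf.integrableExpSet_eq_univ]

theorem norm_gradient_exp_half_sq (hf : C1b f) (t : ℝ) (x : EuclideanSpace ℝ (Fin d)) :
    ‖gradient (fun y => Real.exp (t / 2 * f y)) x‖ ^ 2
      = t ^ 2 / 4 * ‖gradient f x‖ ^ 2 * Real.exp (t * f x) := by
  have hexp : HasDerivAt (fun y => Real.exp (t / 2 * y)) (Real.exp (t / 2 * f x) * (t / 2)) (f x) :=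
    (hasDerivAt_const_mul (t / 2)).exp
  rw [(hasGradientAt_real_comp hexp (hf.hasGradientAt x)).gradient, norm_smul, mul_pow,
    Real.norm_eq_abs, sq_abs, mul_pow, exp_half_mul_sq]
  ring

theorem integral_norm_gradient_exp_half_sq_le [IsFiniteMeasure μ] (hf : C1b f) {L : ℝ}
    (hL : ∀ x, ‖gradient f x‖ ≤ L) (t : ℝ) :
    ∫ x, ‖gradient (fun y => Real.exp (t / 2 * f y)) x‖ ^ 2 ∂μ
      ≤ t ^ 2 / 4 * L ^ 2 * mgf f μ t := by
  simp_rw [hf.norm_gradient_exp_half_sq, mgf, ← integral_const_mul]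
  refine integral_mono_of_nonneg (.of_forall fun x => by positivity)
    ((hf.exp_mul t).integrable.const_mul _) (.of_forall fun x => ?_)
  dsimp only
  gcongr
  exact hL x

end C1b

/-- The defective logarithmic Sobolev inequality `LSI_ε` for a single `ε`, with defect constant
`b = β(ε)`. -/
def DefectiveLSI (μ : Measure (EuclideanSpace ℝ (Fin d))) (ε b : ℝ) : Prop :=
  ∀ f : EuclideanSpace ℝ (Fin d) → ℝ, C1b f →
    ∫ x, (f x) ^ 2 * Real.log (|f x| / L2Norm μ f) ∂μ
      ≤ ε * ∫ x, ‖gradient f x‖ ^ 2 ∂μ + b * (L2Norm μ f) ^ 2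

theorem DefectiveLSI.mul_deriv_cgf_sub_cgf_le [IsFiniteMeasure μ] [NeZero μ] {ε b : ℝ}
    (hμ : DefectiveLSI μ ε b) (hε : 0 ≤ ε) (hf : C1b f) {L : ℝ} (hL : ∀ x, ‖gradient f x‖ ≤ L)
    (t : ℝ) : t * deriv (cgf f μ) t - cgf f μ t ≤ ε / 2 * L ^ 2 * t ^ 2 + 2 * b := by
  have hpos : 0 < mgf f μ t := mgf_pos' (NeZero.ne μ) (hf.exp_mul t).integrable
  have hLSI := hμ _ (hf.exp_mul (t / 2))
  rw [L2Norm_exp_half, integral_exp_half_sq_mul_log (hf.mem_interior_integrableExpSet t),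
    Real.sq_sqrt hpos.le] at hLSI
  refine le_of_mul_le_mul_left ?_ (half_pos hpos)
  calc
    mgf f μ t / 2 * (t * deriv (cgf f μ) t - cgf f μ t)
      ≤ ε * ∫ x, ‖gradient (fun y => Real.exp (t / 2 * f y)) x‖ ^ 2 ∂μ + b * mgf f μ t := hLSI
    _ ≤ ε * (t ^ 2 / 4 * L ^ 2 * mgf f μ t) + b * mgf f μ t := by
      gcongr
      exact hf.integral_norm_gradient_exp_half_sq_le hL t
    _ = mgf f μ t / 2 * (ε / 2 * L ^ 2 * t ^ 2 + 2 * b) := by ring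

theorem herbst_estimate_of_LSIeps_general [IsFiniteMeasure μ] [NeZero μ] {ε b : ℝ}
    (hμ : DefectiveLSI μ ε b) (hε : 0 ≤ ε) (hf : C1b f) {L : ℝ} (hL : ∀ x, ‖gradient f x‖ ≤ L)
    {γ σ : ℝ} (hγ : 0 < γ) (hγσ : γ ≤ σ) :
    mgf f μ σ ≤ Real.exp (ε / 2 * L ^ 2 * σ ^ 2
      + σ * (γ⁻¹ * cgf f μ γ - ε / 2 * L ^ 2 * γ + 2 * b / γ) - 2 * b) := by
  have hdiff : Differentiable ℝ (cgf f μ) := fun t =>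
    (analyticAt_cgf (hf.mem_interior_integrableExpSet t)).differentiableAt
  rw [← exp_cgf (hf.exp_mul σ).integrable]
  exact Real.exp_le_exp.2 <| le_of_mul_deriv_sub_le hdiff.differentiableOn
    (fun t _ => hμ.mul_deriv_cgf_sub_cgf_le hε hf hL t) hγ hγσ

end LogSobolev

/-- if `μ` satisfies the family of logarithmic Sobolev inequalities LSI_ε
(with a decreasing defect function β), then for every `f ∈ C¹_b` with `|∇f| ≤ 1`,
every `ε > 0` and all `0 < γ < σ`,
`∫ e^{σf} dμ ≤ exp((ε/2)σ² + σ(γ⁻¹ log(∫ e^{γf} dμ) − (ε/2)γ + 2β(ε)/γ) − 2β(ε))`. -/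
theorem herbst_estimate_of_LSIeps
    {d : ℕ} (μ : Measure (EuclideanSpace ℝ (Fin d))) [IsProbabilityMeasure μ]
    (β : ℝ → ℝ) (hβpos : ∀ ε > (0 : ℝ), 0 < β ε)
    (hβdec : ∀ ε₁ ε₂ : ℝ, 0 < ε₁ → ε₁ ≤ ε₂ → β ε₂ ≤ β ε₁)
    (hLSI : ∀ ε > (0 : ℝ), ∀ f : EuclideanSpace ℝ (Fin d) → ℝ, C1b f →
      ∫ x, (f x) ^ 2 * Real.log (|f x| / L2Norm μ f) ∂μ
        ≤ ε * ∫ x, ‖gradient f x‖ ^ 2 ∂μ + β ε * (L2Norm μ f) ^ 2) :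
    ∀ f : EuclideanSpace ℝ (Fin d) → ℝ, C1b f → (∀ x, ‖gradient f x‖ ≤ 1) →
      ∀ ε > (0 : ℝ), ∀ γ σ : ℝ, 0 < γ → γ < σ →
        ∫ x, Real.exp (σ * f x) ∂μ
          ≤ Real.exp (ε / 2 * σ ^ 2
              + σ * (γ⁻¹ * Real.log (∫ x, Real.exp (γ * f x) ∂μ)
                      - ε / 2 * γ + 2 * β ε / γ)
              - 2 * β ε) := by
  intro f hf hgrad ε hε γ σ hγ hγσ
  simpa [mgf, cgf] using
    herbst_estimate_of_LSIeps_general (hLSI ε hε) hε.le hf hgrad hγ hγσ.le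
end

section
/- Let I ⊆ ℝ be an interval, 0 < η₀ < Λ, K₃ > 0, κ > 2, R > 0. Let Q : I → Sym(d,ℝ) satisfy η₀|ξ|² ≤ ⟨Q(t)ξ, ξ⟩ ≤ Λ|ξ|² for all t ∈ I and ξ ∈ ℝ^d, and let b : I × ℝ^d → ℝ^d satisfy ⟨b(t,x), x⟩ ≤ −K₃|x|^κ for all t ∈ I and all x with |x| ≥ R. Then for every δ with 0 < δ < K₃/(κΛ) there exist constants a₁ > 0 and γ₁ > 0 such that Tr(Q(t) D²φ_{δ,κ}(x)) + ⟨b(t,x), ∇φ_{δ,κ}(x)⟩ ≤ a₁ − γ₁ φ_{δ,κ}(x) for all t ∈ I and all x with |x| ≥ R, where φ_{δ,κ}(x) := e^{δ|x|^κ}. -/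
open MeasureTheory
open scoped RealInnerProductSpace

/-- The second order operator `Tr(Q D²ψ(x)) + ⟨v, ∇ψ(x)⟩` applied to `ψ` at `x`,
where `Q` is a (symmetric) continuous linear operator on `ℝ^d` and `v ∈ ℝ^d`.
Here `Tr(Q D²ψ(x)) = ∑ᵢ D²ψ(x)(Q eᵢ, eᵢ)` for the standard orthonormal basis `eᵢ`. -/
noncomputable def ellOp {d : ℕ}
    (Q : EuclideanSpace ℝ (Fin d) →L[ℝ] EuclideanSpace ℝ (Fin d))
    (v : EuclideanSpace ℝ (Fin d)) (ψ : EuclideanSpace ℝ (Fin d) → ℝ)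
    (x : EuclideanSpace ℝ (Fin d)) : ℝ :=
  (∑ i : Fin d,
    fderiv ℝ (fun y => fderiv ℝ ψ y) x (Q (EuclideanSpace.single i 1))
      (EuclideanSpace.single i 1))
  + fderiv ℝ ψ x v

/-!
Write `exp (δ * ‖x‖ ^ κ) = f (‖x‖ ^ 2)` with `f s = exp (δ * s ^ p)` and `p = κ / 2`. For a radial
function, `Tr (Q D²ψ) + ⟪v, ∇ψ⟫ = 4 f'' ⟪Q x, x⟫ + 2 f' (Tr Q + ⟪v, x⟫)`, evaluated at
`s = ‖x‖ ^ 2`. The bounds on `Q` and on the drift turn this into at most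
`2 δ p f(s) s ^ (p - 1) (C - c s ^ p)`, where `c = K - δ κ Λ` is positive exactly when `δ` is below
the threshold. Since `2 p - 1 ≥ 0`, the factor of `f(s)` stays below a negative constant for large
`s`, and on the remaining compact range of `s` everything is bounded by continuity.
-/

open Filter Set Topology

section RadialDerivatives

variable {E : Type*} [NormedAddCommGroup E] [InnerProductSpace ℝ E] {x : E} {f f' : ℝ → ℝ}

lemma hasFDerivAt_comp_norm_sq {m : ℝ} (hf : HasDerivAt f m (‖x‖ ^ 2)) :
    HasFDerivAt (fun y : E => f (‖y‖ ^ 2)) ((2 * m) • innerSL ℝ x) x := by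
  refine (hf.comp_hasFDerivAt x (hasStrictFDerivAt_norm_sq x).hasFDerivAt).congr_fderiv ?_
  rw [← Nat.cast_smul_eq_nsmul ℝ, smul_smul, mul_comm, Nat.cast_ofNat]

lemma fderiv_fderiv_comp_norm_sq {m : ℝ}
    (hf : ∀ᶠ s in 𝓝 (‖x‖ ^ 2), HasDerivAt f (f' s) s) (hf' : HasDerivAt f' m (‖x‖ ^ 2))
    (u v : E) :
    fderiv ℝ (fun y => fderiv ℝ (fun z : E => f (‖z‖ ^ 2)) y) x u v
      = 4 * m * (⟪x, u⟫ * ⟪x, v⟫) + 2 * f' (‖x‖ ^ 2) * ⟪u, v⟫ := by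
  have gradient_near : (fun y => fderiv ℝ (fun z : E => f (‖z‖ ^ 2)) y)
      =ᶠ[𝓝 x] fun y => (2 * f' (‖y‖ ^ 2)) • innerSL ℝ y :=
    ((continuous_norm.pow 2).continuousAt.eventually hf).mono fun _ hy =>
      (hasFDerivAt_comp_norm_sq hy).fderiv
  have hasFDerivAt_gradient : HasFDerivAt (fun y : E => (2 * f' (‖y‖ ^ 2)) • innerSL ℝ y) _ x :=
    ((hasFDerivAt_comp_norm_sq hf').const_mul 2).smul (innerSL ℝ).hasFDerivAt
  calc fderiv ℝ (fun y => fderiv ℝ (fun z : E => f (‖z‖ ^ 2)) y) x u v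
      = 2 * f' (‖x‖ ^ 2) * ⟪u, v⟫ + 2 * (2 * m * ⟪x, u⟫) * ⟪x, v⟫ := by
        rw [gradient_near.fderiv_eq, hasFDerivAt_gradient.fderiv]; rfl
    _ = 4 * m * (⟪x, u⟫ * ⟪x, v⟫) + 2 * f' (‖x‖ ^ 2) * ⟪u, v⟫ := by ring

end RadialDerivatives

lemma sum_inner_mul_inner_map {𝕜 E F ι : Type*} [RCLike 𝕜] [NormedAddCommGroup E]
    [InnerProductSpace 𝕜 E] [NormedAddCommGroup F] [InnerProductSpace 𝕜 F] [Fintype ι]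
    (e : OrthonormalBasis ι 𝕜 E) (T : E →ₗ[𝕜] F) (y : F) (x : E) :
    ∑ i, inner 𝕜 y (T (e i)) * inner 𝕜 (e i) x = inner 𝕜 y (T x) := by
  conv_rhs => rw [← e.sum_repr' x]
  simp only [map_sum, map_smul, inner_sum, inner_smul_right, mul_comm]

lemma trace_le_finrank_mul {E : Type*} [NormedAddCommGroup E] [InnerProductSpace ℝ E]
    [FiniteDimensional ℝ E] {T : E →ₗ[ℝ] E} {Λ : ℝ} (hT : ∀ ξ, ⟪T ξ, ξ⟫ ≤ Λ * ‖ξ‖ ^ 2) :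
    LinearMap.trace ℝ E T ≤ Module.finrank ℝ E * Λ := by
  let e := stdOrthonormalBasis ℝ E
  calc LinearMap.trace ℝ E T = ∑ i, ⟪e i, T (e i)⟫ := T.trace_eq_sum_inner e
    _ ≤ ∑ _i : Fin (Module.finrank ℝ E), Λ :=
      Finset.sum_le_sum fun i _ => by simpa [real_inner_comm] using hT (e i)
    _ = Module.finrank ℝ E * Λ := by simp

lemma ellOp_comp_norm_sq {d : ℕ} {f f' : ℝ → ℝ} {m : ℝ} {x : EuclideanSpace ℝ (Fin d)}
    (hf : ∀ᶠ s in 𝓝 (‖x‖ ^ 2), HasDerivAt f (f' s) s) (hf' : HasDerivAt f' m (‖x‖ ^ 2))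
    (Q : EuclideanSpace ℝ (Fin d) →L[ℝ] EuclideanSpace ℝ (Fin d))
    (v : EuclideanSpace ℝ (Fin d)) :
    ellOp Q v (fun y => f (‖y‖ ^ 2)) x
      = 4 * m * ⟪Q x, x⟫ + 2 * f' (‖x‖ ^ 2) * (LinearMap.trace ℝ _ Q.toLinearMap + ⟪v, x⟫) := by
  let e := EuclideanSpace.basisFun (Fin d) ℝ
  have hessian_trace : ∑ i, ⟪x, Q (e i)⟫ * ⟪x, e i⟫ = ⟪Q x, x⟫ := by
    simp_rw [real_inner_comm (e _) x, real_inner_comm x (Q x)]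
    exact sum_inner_mul_inner_map e Q.toLinearMap x x
  have trace_eq : LinearMap.trace ℝ _ Q.toLinearMap = ∑ i, ⟪Q (e i), e i⟫ := by
    simp_rw [real_inner_comm (e _)]
    exact Q.toLinearMap.trace_eq_sum_inner e
  rw [ellOp, (hasFDerivAt_comp_norm_sq hf.self_of_nhds).fderiv, trace_eq, ← hessian_trace]
  simp only [fderiv_fderiv_comp_norm_sq hf hf', Finset.sum_add_distrib, ← Finset.mul_sum,
    smul_apply, innerSL_apply_apply, smul_eq_mul, real_inner_comm x v, e,
    EuclideanSpace.basisFun_apply]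
  ring

lemma hasDerivAt_exp_mul_rpow (δ p : ℝ) {s : ℝ} (hs : 0 < s) :
    HasDerivAt (fun s => Real.exp (δ * s ^ p))
      (δ * p * s ^ (p - 1) * Real.exp (δ * s ^ p)) s := by
  refine ((Real.hasDerivAt_rpow_const (Or.inl hs.ne')).const_mul δ).exp.congr_deriv ?_
  ring

lemma hasDerivAt_rpow_mul_exp_mul_rpow (δ p : ℝ) {s : ℝ} (hs : 0 < s) :
    HasDerivAt (fun s => δ * p * s ^ (p - 1) * Real.exp (δ * s ^ p))
      (δ * p * s ^ (p - 2) * (p - 1 + δ * p * s ^ p) * Real.exp (δ * s ^ p)) s := by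
  have power := (Real.hasDerivAt_rpow_const (p := p - 1) (Or.inl hs.ne')).const_mul (δ * p)
  refine (power.mul (hasDerivAt_exp_mul_rpow δ p hs)).congr_deriv ?_
  have rpow_sq : s ^ (p - 1) * s ^ (p - 1) = s ^ (p - 2) * s ^ p := by
    rw [← Real.rpow_add hs, ← Real.rpow_add hs]
    ring_nf
  rw [show p - 1 - 1 = p - 2 by ring]
  linear_combination δ ^ 2 * p ^ 2 * Real.exp (δ * s ^ p) * rpow_sq

lemma ellOp_exp_norm_sq_rpow_le {d : ℕ} {Λ K δ p : ℝ} (hδ : 0 ≤ δ) (hp : 0 ≤ p)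
    {Q : EuclideanSpace ℝ (Fin d) →L[ℝ] EuclideanSpace ℝ (Fin d)}
    {v x : EuclideanSpace ℝ (Fin d)} (hx : x ≠ 0)
    (hQ : ∀ ξ, 0 ≤ ⟪Q ξ, ξ⟫ ∧ ⟪Q ξ, ξ⟫ ≤ Λ * ‖ξ‖ ^ 2) (hv : ⟪v, x⟫ ≤ -K * (‖x‖ ^ 2) ^ p) :
    ellOp Q v (fun y => Real.exp (δ * (‖y‖ ^ 2) ^ p)) x
      ≤ 2 * δ * p * (Real.exp (δ * (‖x‖ ^ 2) ^ p) *
        ((‖x‖ ^ 2) ^ (p - 1) * ((2 * p + d) * Λ - (K - 2 * δ * p * Λ) * (‖x‖ ^ 2) ^ p))) := by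
  have norm_sq_pos : 0 < ‖x‖ ^ 2 := by positivity
  have trace_le : LinearMap.trace ℝ _ Q.toLinearMap ≤ d * Λ := by
    simpa using trace_le_finrank_mul (T := Q.toLinearMap) fun ξ => (hQ ξ).2
  rw [ellOp_comp_norm_sq ((lt_mem_nhds norm_sq_pos).mono fun _ => hasDerivAt_exp_mul_rpow δ p)
    (hasDerivAt_rpow_mul_exp_mul_rpow δ p norm_sq_pos)]
  obtain ⟨q_nonneg, q_le⟩ := hQ x
  set s := ‖x‖ ^ 2
  have rpow_sub_one : s ^ (p - 1) = s ^ (p - 2) * s := by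
    rw [← Real.rpow_add_one norm_sq_pos.ne']
    ring_nf
  -- Replacing `p - 1` by `p` avoids a case distinction on the sign of `p - 1`.
  have second_order : (p - 1 + δ * p * s ^ p) * ⟪Q x, x⟫ ≤ (p + δ * p * s ^ p) * (Λ * s) := by
    gcongr
    linarith
  have first_order : LinearMap.trace ℝ _ Q.toLinearMap + ⟪v, x⟫ ≤ d * Λ - K * s ^ p := by
    linarith
  calc _ = 2 * δ * p * (Real.exp (δ * s ^ p) * (s ^ (p - 2) *
          (2 * ((p - 1 + δ * p * s ^ p) * ⟪Q x, x⟫)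
            + s * (LinearMap.trace ℝ _ Q.toLinearMap + ⟪v, x⟫)))) := by
        rw [rpow_sub_one]; ring
    _ ≤ 2 * δ * p * (Real.exp (δ * s ^ p) * (s ^ (p - 2) *
          (2 * ((p + δ * p * s ^ p) * (Λ * s)) + s * (d * Λ - K * s ^ p)))) := by gcongr
    _ = _ := by rw [rpow_sub_one]; ring

lemma bddAbove_image_Ici_of_eventually_le {α β : Type*} [LinearOrder α] [TopologicalSpace α]
    [CompactIccSpace α] [LinearOrder β] [TopologicalSpace β] [ClosedIciTopology β]
    {f : α → β} {a : α} {M : β} (hf : ContinuousOn f (Ici a))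
    (hM : ∀ᶠ x in atTop, f x ≤ M) : BddAbove (f '' Ici a) := by
  have : Nonempty α := ⟨a⟩
  have : Nonempty β := ⟨M⟩
  obtain ⟨N, hN⟩ := (hM.and (eventually_ge_atTop a)).exists_forall_of_atTop
  have compact_part : BddAbove (f '' Icc a N) :=
    isCompact_Icc.bddAbove_image (hf.mono Icc_subset_Ici_self)
  have tail : BddAbove (f '' Ici N) :=
    ⟨M, forall_mem_image.2 fun x hx => (hN x hx).1⟩
  rw [← Icc_union_Ici_eq_Ici (hN N le_rfl).2, image_union]
  exact compact_part.union tail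

lemma eventually_rpow_sub_one_mul_le {c p : ℝ} (C : ℝ) (hc : 0 < c) (hp : 1 / 2 ≤ p) :
    ∀ᶠ s : ℝ in atTop, s ^ (p - 1) * (C - c * s ^ p) ≤ -(c / 2) := by
  have rpow_large : ∀ᶠ s : ℝ in atTop, C / (c / 2) ≤ s ^ p :=
    (tendsto_rpow_atTop (by linarith)).eventually_ge_atTop _
  filter_upwards [rpow_large, eventually_ge_atTop 1] with s hs hs1
  have s_pos : 0 < s := by linarith
  rw [div_le_iff₀ (by positivity)] at hs
  have one_le : 1 ≤ s ^ (p - 1) * s ^ p := by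
    rw [← Real.rpow_add s_pos]
    exact Real.one_le_rpow hs1 (by linarith)
  calc s ^ (p - 1) * (C - c * s ^ p) ≤ s ^ (p - 1) * (-(c / 2) * s ^ p) := by
        gcongr; linarith
    _ = -(c / 2) * (s ^ (p - 1) * s ^ p) := by ring
    _ ≤ -(c / 2) := by nlinarith

lemma exists_exp_mul_rpow_mul_le {c p r : ℝ} (C δ : ℝ) (hc : 0 < c) (hp : 1 / 2 ≤ p)
    (hr : 0 < r) :
    ∃ a > 0, ∀ s ≥ r, Real.exp (δ * s ^ p) * (s ^ (p - 1) * (C - c * s ^ p))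
      ≤ a - c / 2 * Real.exp (δ * s ^ p) := by
  let g : ℝ → ℝ := fun s => Real.exp (δ * s ^ p) * (s ^ (p - 1) * (C - c * s ^ p) + c / 2)
  have g_eventually_nonpos : ∀ᶠ s in atTop, g s ≤ 0 := by
    filter_upwards [eventually_rpow_sub_one_mul_le C hc hp] with s hs
    exact mul_nonpos_of_nonneg_of_nonpos (Real.exp_nonneg _) (by linarith)
  have rpow_continuousOn (q : ℝ) : ContinuousOn (fun s : ℝ => s ^ q) (Ici r) :=
    continuousOn_id.rpow_const fun s hs => Or.inl (hr.trans_le hs).ne'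
  have g_continuousOn : ContinuousOn g (Ici r) := by
    have := rpow_continuousOn p
    have := rpow_continuousOn (p - 1)
    fun_prop
  obtain ⟨M, hM⟩ := bddAbove_image_Ici_of_eventually_le g_continuousOn g_eventually_nonpos
  refine ⟨max M 1, by positivity, fun s hs => ?_⟩
  have g_le : g s ≤ max M 1 := (hM (mem_image_of_mem g hs)).trans (le_max_left M 1)
  linarith [show g s = Real.exp (δ * s ^ p) * (s ^ (p - 1) * (C - c * s ^ p))
    + c / 2 * Real.exp (δ * s ^ p) by simp only [g]; ring]

theorem lyapunov_exp_power_general {d : ℕ} {Λ K κ R δ : ℝ} (hκ : 1 ≤ κ) (hR : 0 < R)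
    (hδ : 0 < δ) (hδK : δ * (κ * Λ) < K) :
    ∃ a > (0 : ℝ), ∃ γ > (0 : ℝ),
      ∀ (Q : EuclideanSpace ℝ (Fin d) →L[ℝ] EuclideanSpace ℝ (Fin d))
        (v x : EuclideanSpace ℝ (Fin d)),
        (∀ ξ, 0 ≤ ⟪Q ξ, ξ⟫ ∧ ⟪Q ξ, ξ⟫ ≤ Λ * ‖ξ‖ ^ 2) → ⟪v, x⟫ ≤ -K * ‖x‖ ^ κ → R ≤ ‖x‖ →
          ellOp Q v (fun y => Real.exp (δ * ‖y‖ ^ κ)) x ≤ a - γ * Real.exp (δ * ‖x‖ ^ κ) := by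
  obtain ⟨p, rfl⟩ : ∃ p, κ = 2 * p := ⟨κ / 2, by ring⟩
  have c_pos : 0 < K - 2 * δ * p * Λ := by linarith
  have factor_pos : 0 < 2 * δ * p := mul_pos (by positivity) (by linarith)
  obtain ⟨a, a_pos, ha⟩ := exists_exp_mul_rpow_mul_le ((2 * p + d) * Λ) δ c_pos
    (show 1 / 2 ≤ p by linarith) (pow_pos hR 2)
  refine ⟨2 * δ * p * a, by positivity, 2 * δ * p * ((K - 2 * δ * p * Λ) / 2), by positivity,
    fun Q v x hQ hv hx => ?_⟩
  have rpow_norm_sq (y : EuclideanSpace ℝ (Fin d)) : ‖y‖ ^ (2 * p) = (‖y‖ ^ 2) ^ p := by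
    rw [Real.rpow_mul (norm_nonneg y), Real.rpow_two]
  simp only [rpow_norm_sq] at hv ⊢
  calc _ ≤ 2 * δ * p * _ := ellOp_exp_norm_sq_rpow_le hδ.le (by linarith)
        (norm_pos_iff.1 (hR.trans_le hx)) hQ hv
    _ ≤ 2 * δ * p * _ :=
        mul_le_mul_of_nonneg_left (ha (‖x‖ ^ 2) (by gcongr)) factor_pos.le
    _ = _ := by ring

/-- under the drift condition `⟨b(t,x),x⟩ ≤ −K₃|x|^κ`, `κ > 2`, for every
`0 < δ < K₃/(κΛ)` there exist `a₁, γ₁ > 0` with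
`𝒜(t)φ_{δ,κ}(x) ≤ a₁ − γ₁φ_{δ,κ}(x)` for all `t ∈ I` and `|x| ≥ R`, where
`φ_{δ,κ}(x) = e^{δ|x|^κ}`. -/
theorem lyapunov_exp_power
    {d : ℕ} (hd : 1 ≤ d) (I : Set ℝ) (hIconn : I.OrdConnected)
    (η₀ Λ K₃ κ R : ℝ)
    (hη₀ : 0 < η₀) (hηΛ : η₀ < Λ) (hK : 0 < K₃) (hκ : 2 < κ) (hR : 0 < R)
    (Q : ℝ → EuclideanSpace ℝ (Fin d) →L[ℝ] EuclideanSpace ℝ (Fin d))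
    (hQsym : ∀ t ∈ I, ∀ ξ η : EuclideanSpace ℝ (Fin d), ⟪Q t ξ, η⟫ = ⟪ξ, Q t η⟫)
    (hQell : ∀ t ∈ I, ∀ ξ : EuclideanSpace ℝ (Fin d),
      η₀ * ‖ξ‖ ^ 2 ≤ ⟪Q t ξ, ξ⟫ ∧ ⟪Q t ξ, ξ⟫ ≤ Λ * ‖ξ‖ ^ 2)
    (b : ℝ → EuclideanSpace ℝ (Fin d) → EuclideanSpace ℝ (Fin d))
    (hb : ∀ t ∈ I, ∀ x : EuclideanSpace ℝ (Fin d), R ≤ ‖x‖ →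
      ⟪b t x, x⟫ ≤ -K₃ * ‖x‖ ^ κ) :
    ∀ δ : ℝ, 0 < δ → δ < K₃ / (κ * Λ) →
      ∃ a₁ > (0 : ℝ), ∃ γ₁ > (0 : ℝ),
        ∀ t ∈ I, ∀ x : EuclideanSpace ℝ (Fin d), R ≤ ‖x‖ →
          ellOp (Q t) (b t x) (fun y => Real.exp (δ * ‖y‖ ^ κ)) x
            ≤ a₁ - γ₁ * Real.exp (δ * ‖x‖ ^ κ) := by
  intro δ hδ hδK
  have κΛ_pos : 0 < κ * Λ := mul_pos (by linarith) (hη₀.trans hηΛ)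
  obtain ⟨a, a_pos, γ, γ_pos, bound⟩ := lyapunov_exp_power_general (d := d)
    (one_le_two.trans hκ.le) hR hδ ((lt_div_iff₀ κΛ_pos).1 hδK)
  exact ⟨a, a_pos, γ, γ_pos, fun t ht x hx => bound (Q t) (b t x) x
    (fun ξ => ⟨(by positivity : 0 ≤ η₀ * ‖ξ‖ ^ 2).trans (hQell t ht ξ).1, (hQell t ht ξ).2⟩)
    (hb t ht x hx) hx⟩
end
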